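/- Let w be a Kreweras word of length 3n. Then σ_{evac(w)} = rc(σ_w^{-1}), where rc denotes reverse-complement, i.e., for every i ∈ {1,…,3n}, σ_{evac(w)}(i) = 3n+1 − σ_w^{-1}(3n+1−i). -/

import Mathlib

/-- The three letters of a Kreweras word. -/
inductive KLetter : Type
  | A | B | C
deriving DecidableEq, Repr

open KLetter

/-- `w` is a Kreweras word of length `3 * n`: it has `n` `A`'s, `n` `B`'s, `n` `C`'s,
and every prefix has at least as many `A`'s as `B`'s and at least as many `A`'s as `C`'s. -/
def IsKrewerasWord (n : ℕ) (w : List KLetter) : Prop :=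
  w.length = 3 * n ∧ w.count A = n ∧ w.count B = n ∧ w.count C = n ∧
  ∀ k : ℕ, (w.take k).count B ≤ (w.take k).count A ∧
           (w.take k).count C ≤ (w.take k).count A

/-- `kiota w` is the smallest index `ι ≥ 1` (1-indexed) such that the prefix of
length `ι` of `w` has equally many `A`'s as `B`'s, or equally many `A`'s as `C`'s
(and `0` if no such index exists). -/
def kiota (w : List KLetter) : ℕ :=
  (((List.range (w.length + 1)).filter fun k =>
      decide (1 ≤ k) &&
      (((w.take k).count A == (w.take k).count B) ||
       ((w.take k).count A == (w.take k).count C))).headD 0)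

/-- Promotion of a Kreweras word:
`pro w = (w₂, …, w_{ι-1}, A, w_{ι+1}, …, w_{3n}, w_ι)` where `ι = kiota w`. -/
def pro (w : List KLetter) : List KLetter :=
  ((w.drop 1).set (kiota w - 2) A) ++ [w.getD (kiota w - 1) A]

/-- The trip permutation `σ_w` of a Kreweras word of length `3 * n`, as a function on
1-indexed positions: `σ_w i` is the unique element of `{1, …, 3n}` congruent to
`kiota (pro^[i-1] w) + i - 1` modulo `3 * n`. -/
def ksigma (n : ℕ) (w : List KLetter) (i : ℕ) : ℕ :=
  (kiota (pro^[i - 1] w) + i - 2) % (3 * n) + 1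

/-- `keps w i` is the letter of `pro^[i-1] w` in (1-indexed) position `kiota (pro^[i-1] w)`. -/
def keps (w : List KLetter) (i : ℕ) : KLetter :=
  (pro^[i - 1] w).getD (kiota (pro^[i - 1] w) - 1) A

/-- The negation swapping `B` and `C` (and fixing `A`). -/
def negL : KLetter → KLetter
  | A => A
  | B => C
  | C => B

open Classical in
/-- The involution `τ_i` on Kreweras words of length `3 * n`: swap the letters in
(1-indexed) positions `i` and `i + 1` if the result is again a Kreweras word,
and otherwise do nothing. -/
noncomputable def tau (n i : ℕ) (w : List KLetter) : List KLetter :=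
  let w' := (w.set (i - 1) (w.getD i A)).set i (w.getD (i - 1) A)
  if IsKrewerasWord n w' then w' else w

/-- `tauDown n j = τ_j ∘ τ_{j-1} ∘ ⋯ ∘ τ_1`. -/
noncomputable def tauDown (n : ℕ) : ℕ → List KLetter → List KLetter
  | 0, w => w
  | j + 1, w => tau n (j + 1) (tauDown n j w)

/-- `evacAux n j = (tauDown n 1) ∘ (tauDown n 2) ∘ ⋯ ∘ (tauDown n j)`. -/
noncomputable def evacAux (n : ℕ) : ℕ → List KLetter → List KLetter
  | 0, w => w
  | j + 1, w => evacAux n j (tauDown n (j + 1) w)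

/-- Evacuation on Kreweras words of length `3 * n`:
`evac = (τ_1) ∘ (τ_2 ∘ τ_1) ∘ ⋯ ∘ (τ_{3n-1} ∘ ⋯ ∘ τ_2 ∘ τ_1)`. -/
noncomputable def evac (n : ℕ) (w : List KLetter) : List KLetter :=
  evacAux n (3 * n - 1) w

/-- `tauAsc n k c = τ_{k+c-1} ∘ ⋯ ∘ τ_{k+1} ∘ τ_k`. -/
noncomputable def tauAsc (n k : ℕ) : ℕ → List KLetter → List KLetter
  | 0, w => w
  | j + 1, w => tau n (k + j) (tauAsc n k j w)

/-- `evacStarAux n j = (tauAsc n 1 (3n-1)) ∘ (tauAsc n 2 (3n-2)) ∘ ⋯ ∘ (tauAsc n j (3n-j))`. -/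
noncomputable def evacStarAux (n : ℕ) : ℕ → List KLetter → List KLetter
  | 0, w => w
  | j + 1, w => evacStarAux n j (tauAsc n (j + 1) (3 * n - (j + 1)) w)

/-- Dual evacuation on Kreweras words of length `3 * n`:
`evac* = (τ_{3n-1} ∘ ⋯ ∘ τ_1) ∘ (τ_{3n-1} ∘ ⋯ ∘ τ_2) ∘ ⋯ ∘ (τ_{3n-1})`. -/
noncomputable def evacStar (n : ℕ) (w : List KLetter) : List KLetter :=
  evacStarAux n (3 * n - 1) w

/-- The three-element "V"-shaped poset: `a < b`, `a < c`, with `b`, `c` incomparable. -/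
inductive VP : Type
  | a | b | c
deriving DecidableEq

instance : PartialOrder VP where
  le x y := x = y ∨ x = VP.a
  le_refl x := Or.inl rfl
  le_trans x y z hxy hyz := by
    rcases hxy with rfl | rfl
    · exact hyz
    · exact Or.inr rfl
  le_antisymm x y hxy hyx := by
    rcases hxy with rfl | rfl
    · rfl
    · rcases hyx with rfl | rfl <;> rfl

/-- The labeling of elements of `V(n) = VP × Fin n` by letters. -/
def vlabel {n : ℕ} (p : VP × Fin n) : KLetter :=
  match p.1 with
  | VP.a => A
  | VP.b => B
  | VP.c => C

/-- `L` is a linear extension of `V(n) = VP × Fin n` (with the product order):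
a list of all elements of `V(n)`, each appearing once, such that `L_i ≤ L_j`
implies `i ≤ j`. -/
def IsLinearExtension (n : ℕ) (L : List (VP × Fin n)) : Prop :=
  L.Nodup ∧ (∀ p : VP × Fin n, p ∈ L) ∧
  ∀ i j : Fin L.length, L.get i ≤ L.get j → (i : ℕ) ≤ (j : ℕ)

/-- A connected Kreweras word: a Kreweras word of length `3 * n` having no proper
nonempty consecutive substring which is itself a Kreweras word. -/
def ConnectedKrewerasWord (n : ℕ) (w : List KLetter) : Prop :=
  IsKrewerasWord n w ∧
  ∀ (u : List KLetter) (m : ℕ), u <:+: w → u ≠ [] → u ≠ w → ¬ IsKrewerasWord m u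

/-!
The height vectors of the prefixes of `w`, `pro w`, `pro² w`, … form a growth diagram governed by an
involutive local rule, and `evac w` reads this diagram along a column: its prefix of length `k` has
the same heights as that of `pro^(3n-k) w`. Hence `pro^k ∘ evac ∘ pro^k = evac`, and the first wall
met by `evac w` is the one met by `pro^r w` when that happens in column `3n`, that is, when
`ι (pro^r w) + r = 3n`. Therefore `ι (pro^i (evac w)) = ι (pro^j w)` whenever `3n` divides
`ι (pro^j w) + i + j`, provided that `ι (pro^k w)` depends only on `k` modulo `3n`.

The latter holds because `pro^(3n)` exchanges the letters `B` and `C`. Up to promotion and this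
exchange, `w` begins with `A B`. Deleting these letters and the first `C` to overtake the
remaining `A`s leaves a shorter Kreweras word `u`; promoting both words in parallel, the three
deleted letters keep their places relative to `u` and end up as `A`, `C`, `B`.
-/

namespace Kreweras

/-! ### Heights and promotion -/

/-- The height of `w` above the `b`-wall: the excess of `A`'s over `b`'s. It vanishes identically
for `b = A`, so that the two walls of the quadrant are those of the letters `B` and `C`. -/
def height (w : List KLetter) (b : KLetter) : ℤ :=
  w.count A - w.count b

@[simp, grind =] lemma height_nil (b : KLetter) : height [] b = 0 := by simp [height]

@[simp, grind =] lemma height_A (w : List KLetter) : height w A = 0 := by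
  simp [height]

@[grind =] lemma height_cons (a : KLetter) (w : List KLetter) (b : KLetter) :
    height (a :: w) b = (if a = A then 1 else 0) - (if a = b then 1 else 0) + height w b := by
  grind [height]

@[grind =] lemma height_append (v w : List KLetter) (b : KLetter) :
    height (v ++ w) b = height v b + height w b := by
  grind [height]

/-- Starting from height `x` above the `b`-wall, the walk `w` never crosses that wall. -/
def StaysNonneg (b : KLetter) (x : ℤ) (w : List KLetter) : Prop :=
  ∀ k, 0 ≤ x + height (w.take k) b

@[grind =] lemma staysNonneg_nil {b : KLetter} {x : ℤ} : StaysNonneg b x [] ↔ 0 ≤ x := by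
  simp [StaysNonneg]

@[simp, grind =] lemma staysNonneg_A {w : List KLetter} {x : ℤ} :
    StaysNonneg A x w ↔ 0 ≤ x := by
  simp [StaysNonneg]

@[grind =] lemma staysNonneg_cons {a b : KLetter} {x : ℤ} {w : List KLetter} :
    StaysNonneg b x (a :: w) ↔ 0 ≤ x ∧ StaysNonneg b (x + height [a] b) w := by
  constructor
  · refine fun h => ⟨by simpa using h 0, fun k => ?_⟩
    have := h (k + 1)
    grind
  · rintro ⟨h₀, h⟩ (_ | k)
    · simpa
    · have := h k
      grind

@[grind →] lemma StaysNonneg.nonneg {b : KLetter} {x : ℤ} {w : List KLetter}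
    (h : StaysNonneg b x w) : 0 ≤ x := by
  simpa using h 0

@[grind →] lemma StaysNonneg.nonneg_add_height {b : KLetter} {x : ℤ} {w : List KLetter}
    (h : StaysNonneg b x w) : 0 ≤ x + height w b := by
  simpa using h w.length

@[grind =] lemma staysNonneg_append {b : KLetter} {x : ℤ} {v w : List KLetter} :
    StaysNonneg b x (v ++ w) ↔ StaysNonneg b x v ∧ StaysNonneg b (x + height v b) w := by
  induction v generalizing x with grind

@[grind →] lemma StaysNonneg.mono {b : KLetter} {x y : ℤ} {w : List KLetter}
    (h : StaysNonneg b x w) (hxy : x ≤ y) : StaysNonneg b y w :=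
  fun k => (h k).trans (by gcongr)

@[grind →] lemma StaysNonneg.lt_of_not {b : KLetter} {x y : ℤ} {w : List KLetter}
    (h : StaysNonneg b x w) (h' : ¬ StaysNonneg b y w) : y < x :=
  lt_of_not_ge fun hxy => h' (h.mono hxy)

/-- Kreweras words of unspecified length, described by their heights. -/
structure IsKreweras (w : List KLetter) : Prop where
  height_eq_zero (b : KLetter) : height w b = 0
  staysNonneg (b : KLetter) : StaysNonneg b 0 w

lemma isKrewerasWord_iff {n : ℕ} {w : List KLetter} :
    IsKrewerasWord n w ↔ w.length = 3 * n ∧ IsKreweras w := by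
  have length_eq : w.length = w.count A + w.count B + w.count C := by
    induction w with
    | nil => rfl
    | cons a w ih => cases a <;> grind
  constructor
  · rintro ⟨hl, hA, hB, hC, hpre⟩
    refine ⟨hl, fun b => ?_, fun b k => ?_⟩
    · cases b <;> simp [height, *]
    · have := hpre k
      cases b <;> simp [height, this]
  · rintro ⟨hl, h₀, hpre⟩
    have hB := h₀ B
    have hC := h₀ C
    simp only [height] at hB hC
    refine ⟨hl, by omega, by omega, by omega, fun k => ?_⟩
    have hB := hpre B k
    have hC := hpre C k
    simp only [height] at hB hC
    omega

/-- `A :: (p ++ b :: q)` meets a wall for the first time at its letter `b`, which is therefore the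
letter that promotion replaces by `A`. -/
structure Bump (p : List KLetter) (b : KLetter) : Prop where
  ne_A : b ≠ A
  staysNonneg (c : KLetter) : StaysNonneg c 0 p
  height_eq_zero : height p b = 0

lemma exists_first_crossing {S : Set KLetter} {w : List KLetter}
    (h : ¬ ∀ c ∈ S, StaysNonneg c 0 w) :
    ∃ p q, ∃ b ∈ S, b ≠ A ∧ w = p ++ b :: q ∧ (∀ c ∈ S, StaysNonneg c 0 p) ∧ height p b = 0 := by
  induction w using List.reverseRecOn with
  | nil => exact absurd (fun c _ => by grind) h
  | append_singleton w a ih =>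
    by_cases hw : ∀ c ∈ S, StaysNonneg c 0 w
    · push Not at h
      obtain ⟨b, hb, hcross⟩ := h
      have := hw b hb
      exact ⟨w, [], b, hb, by grind, by grind, hw, by grind⟩
    · obtain ⟨p, q, b, hb, hbA, rfl, hp, hpb⟩ := ih hw
      exact ⟨p, q ++ [a], b, hb, hbA, by simp, hp, hpb⟩

lemma IsKreweras.exists_bump {w : List KLetter} (hw : IsKreweras w) (hne : w ≠ []) :
    ∃ p b q, w = A :: (p ++ b :: q) ∧ Bump p b := by
  obtain ⟨a, w, rfl⟩ := List.exists_cons_of_ne_nil hne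
  obtain rfl : a = A := by
    have := hw.staysNonneg a
    grind
  have hcross : ¬ ∀ c ∈ Set.univ, StaysNonneg c 0 w := fun h => by
    have := h B trivial
    have := hw.height_eq_zero B
    grind
  obtain ⟨p, q, b, -, hbA, rfl, hp, hpb⟩ := exists_first_crossing hcross
  exact ⟨p, b, q, rfl, hbA, fun c => hp c trivial, hpb⟩

/-- The height vector of the prefix of length `k` of `w`. -/
def path (w : List KLetter) (k : ℕ) : KLetter → ℤ :=
  height (w.take k)

@[simp, grind =] lemma path_apply (w : List KLetter) (k : ℕ) (b : KLetter) :
    path w k b = height (w.take k) b :=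
  rfl

/-- The point `x` lies on one of the two walls of the quadrant. -/
def OnWall (x : KLetter → ℤ) : Prop :=
  ∃ b, b ≠ A ∧ x b = 0

/-- The positive times at which the walk `w` meets a wall; `kiota w` is the first of them. -/
def wallTimes (w : List KLetter) : Set ℕ :=
  {k | 0 < k ∧ k ≤ w.length ∧ OnWall (path w k)}

lemma kiota_eq_of_isLeast {w : List KLetter} {k : ℕ} (hk : IsLeast (wallTimes w) k) :
    kiota w = k := by
  obtain ⟨⟨hpos, hlen, hwall⟩, hleast⟩ := hk
  have onWall_iff (i : ℕ) : OnWall (path w i) ↔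
      (w.take i).count A = (w.take i).count B ∨ (w.take i).count A = (w.take i).count C := by
    constructor
    · rintro ⟨b, hb, h⟩
      cases b <;> simp only [path_apply, height, ne_eq, not_true_eq_false] at hb h <;> omega
    · rintro (h | h)
      · exact ⟨B, by simp, by simp [height, h]⟩
      · exact ⟨C, by simp, by simp [height, h]⟩
  unfold kiota
  rw [List.headD_eq_head?_getD, List.head?_filter]
  suffices h : List.find? _ (List.range (w.length + 1)) = some k by rw [h, Option.getD_some]
  rw [List.find?_range_eq_some]
  refine ⟨?_, ?_, fun j hj => ?_⟩
  · simpa [← onWall_iff, hwall] using Nat.succ_le_of_lt hpos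
  · simp; omega
  · have : ¬ (0 < j ∧ OnWall (path w j)) := fun ⟨h₀, h⟩ =>
      (hleast ⟨h₀, by omega, h⟩).not_gt hj
    rw [onWall_iff] at this
    simp
    omega

lemma Bump.isLeast_wallTimes {p : List KLetter} {b : KLetter} (hb : Bump p b)
    (q : List KLetter) : IsLeast (wallTimes (A :: (p ++ b :: q))) (p.length + 2) := by
  refine ⟨⟨by omega, by simp, b, hb.ne_A, ?_⟩, ?_⟩
  · have := hb.ne_A
    have := hb.height_eq_zero
    grind [List.take_length_add_append]
  · rintro (_ | k) ⟨hpos, -, c, hc, hk⟩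
    · omega
    by_contra! hlt
    have := hb.staysNonneg c k
    grind

lemma Bump.kiota_eq {p : List KLetter} {b : KLetter} (hb : Bump p b) (q : List KLetter) :
    kiota (A :: (p ++ b :: q)) = p.length + 2 :=
  kiota_eq_of_isLeast (hb.isLeast_wallTimes q)

lemma IsKreweras.isLeast_kiota {w : List KLetter} (hw : IsKreweras w) (hne : w ≠ []) :
    IsLeast (wallTimes w) (kiota w) := by
  obtain ⟨p, b, q, rfl, hb⟩ := hw.exists_bump hne
  exact hb.kiota_eq q ▸ hb.isLeast_wallTimes q

lemma Bump.pro_eq {p : List KLetter} {b : KLetter} (hb : Bump p b) (q : List KLetter) :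
    pro (A :: (p ++ b :: q)) = p ++ A :: (q ++ [b]) := by
  simp [pro, hb.kiota_eq]

protected lemma IsKreweras.pro {w : List KLetter} (hw : IsKreweras w) (hne : w ≠ []) :
    IsKreweras (pro w) := by
  obtain ⟨p, b, q, rfl, hb⟩ := hw.exists_bump hne
  rw [hb.pro_eq]
  have := hb.ne_A
  have := hb.height_eq_zero
  refine ⟨fun c => ?_, fun c => ?_⟩
  · have := hw.height_eq_zero c
    grind
  · have := hw.height_eq_zero c
    have := hw.staysNonneg c
    have := hb.staysNonneg c
    grind

lemma IsKreweras.length_pro {w : List KLetter} (hw : IsKreweras w) (hne : w ≠ []) :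
    (pro w).length = w.length := by
  obtain ⟨p, b, q, rfl, hb⟩ := hw.exists_bump hne
  rw [hb.pro_eq]
  simp
  omega

/-! ### Walks and Bender–Knuth involutions -/

lemma path_injective : Function.Injective path := by
  intro v w h
  induction v generalizing w with
  | nil =>
    cases w with
    | nil => rfl
    | cons b w =>
      have hB := congr($h 1 B)
      have hC := congr($h 1 C)
      cases b <;> grind
  | cons a v ih =>
    cases w with
    | nil =>
      have hB := congr($h 1 B)
      have hC := congr($h 1 C)
      cases a <;> grind
    | cons b w =>
      obtain rfl : a = b := by
        have hB := congr($h 1 B)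
        have hC := congr($h 1 C)
        cases a <;> cases b <;> grind
      congr 1
      refine ih (funext₂ fun k c => ?_)
      have := congr($h (k + 1) c)
      grind

lemma IsKreweras.path_nonneg {w : List KLetter} (hw : IsKreweras w) (k : ℕ) : 0 ≤ path w k :=
  fun b => by simpa using hw.staysNonneg b k

lemma path_eq_zero {n : ℕ} {w : List KLetter} (hw : IsKrewerasWord n w) {k : ℕ}
    (hk : 3 * n ≤ k) : path w k = 0 := by
  obtain ⟨hlen, hw⟩ := isKrewerasWord_iff.1 hw
  funext b
  simp [path_apply, List.take_of_length_le (hlen.trans_le hk), hw.height_eq_zero]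

open Classical in
/-- The local rule of a growth diagram: `x` is reflected in the midpoint of `a` and `b`, unless
that would leave the quadrant. -/
noncomputable def toggle (a x b : KLetter → ℤ) : KLetter → ℤ :=
  if 0 ≤ a + b - x then a + b - x else x

lemma toggle_toggle {a x b : KLetter → ℤ} (hx : 0 ≤ x) : toggle a (toggle a x b) b = x := by
  by_cases h : 0 ≤ a + b - x <;> simp [toggle, h, hx]

lemma path_append_of_le {l r : List KLetter} {k : ℕ} (hk : k ≤ l.length) :
    path (l ++ r) k = path l k := by
  simp only [path, List.take_append_of_le_length hk]

lemma path_append_add (l r : List KLetter) (k : ℕ) :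
    path (l ++ r) (l.length + k) = height l + path r k := by
  funext c
  simp [List.take_length_add_append, height_append]

lemma path_swap (l r : List KLetter) (a b : KLetter) {k : ℕ} (hk : k ≠ l.length + 1) :
    path (l ++ b :: a :: r) k = path (l ++ a :: b :: r) k := by
  rcases le_or_gt k l.length with hle | hlt
  · simp only [path_append_of_le hle]
  · obtain ⟨m, rfl⟩ : ∃ m, k = l.length + (m + 2) := ⟨k - (l.length + 2), by omega⟩
    rw [path_append_add, path_append_add]
    funext c
    simp only [Pi.add_apply, path_apply]
    grind

lemma isKreweras_swap_iff {l r : List KLetter} {a b : KLetter}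
    (hw : IsKreweras (l ++ a :: b :: r)) :
    IsKreweras (l ++ b :: a :: r) ↔ 0 ≤ height (l ++ [b]) := by
  have hheight (c) := hw.height_eq_zero c
  have hpre (c) := hw.staysNonneg c
  constructor
  · intro h c
    have := h.staysNonneg c
    simp only [Pi.zero_apply]
    grind
  · refine fun h => ⟨fun c => ?_, fun c => ?_⟩
    · have := hheight c
      grind
    · have := hpre c
      have := h c
      simp only [Pi.zero_apply] at this
      grind

lemma exists_adjacent {α : Type*} {w : List α} {i : ℕ} (hi : i + 1 < w.length) :
    ∃ l a b r, w = l ++ a :: b :: r ∧ l.length = i :=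
  ⟨w.take i, w[i], w[i + 1], w.drop (i + 2), by simp, by grind⟩

open Classical in
lemma tau_length_succ (n : ℕ) (l r : List KLetter) (a b : KLetter) :
    tau n (l.length + 1) (l ++ a :: b :: r) =
      if IsKrewerasWord n (l ++ b :: a :: r) then l ++ b :: a :: r else l ++ a :: b :: r := by
  simp [tau]

lemma isKrewerasWord_tau {n i : ℕ} {w : List KLetter} (hw : IsKrewerasWord n w) :
    IsKrewerasWord n (tau n i w) := by
  unfold tau
  grind

lemma path_tau {n i : ℕ} {w : List KLetter} (hw : IsKrewerasWord n w) (hi : i + 1 < 3 * n) :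
    path (tau n (i + 1) w) =
      Function.update (path w) (i + 1) (toggle (path w i) (path w (i + 1)) (path w (i + 2))) := by
  classical
  rw [isKrewerasWord_iff] at hw
  obtain ⟨hlen, hw⟩ := hw
  obtain ⟨l, a, b, r, rfl, rfl⟩ := exists_adjacent (hi.trans_eq hlen.symm)
  have hmid : path (l ++ a :: b :: r) l.length + path (l ++ a :: b :: r) (l.length + 2)
      - path (l ++ a :: b :: r) (l.length + 1) = height (l ++ [b]) := by
    rw [path_append_add, path_append_add, path_append_of_le le_rfl]
    funext c
    simp
    grind
  have hswap : IsKrewerasWord n (l ++ b :: a :: r) ↔ 0 ≤ height (l ++ [b]) := by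
    rw [isKrewerasWord_iff, isKreweras_swap_iff hw]
    simp_all
  rw [tau_length_succ, toggle, hmid]
  funext k
  by_cases hk : k = l.length + 1
  · subst hk
    simp only [Function.update_self, hswap]
    split_ifs
    · funext c
      simp
      grind
    · rfl
  · rw [Function.update_of_ne hk]
    split_ifs
    · exact path_swap l r a b hk
    · rfl

lemma Bump.path_pro {p : List KLetter} {b : KLetter} (hb : Bump p b) (q : List KLetter) {k : ℕ}
    (hk : k ≤ p.length + 1 + q.length) :
    path (pro (A :: (p ++ b :: q))) k = path (A :: (p ++ b :: q)) (k + 1) -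
      if k ≤ p.length then height [A] else height [b] := by
  rw [hb.pro_eq, ← List.cons_append (bs := b :: q)]
  split_ifs with h
  · rw [path_append_of_le h, path_append_of_le (by simpa)]
    funext c
    simp
    grind
  · obtain ⟨m, rfl⟩ : ∃ m, k = p.length + (m + 1) := ⟨k - (p.length + 1), by omega⟩
    have hlen : p.length + (m + 1) + 1 = (A :: p).length + (m + 1) := by simp; omega
    rw [hlen, path_append_add, path_append_add]
    funext c
    have : m ≤ q.length := by omega
    simp [List.take_append_of_le_length this]
    grind

/-! ### The growth diagram of promotion -/

lemma toggle_of_nonneg {a x b : KLetter → ℤ} (h : 0 ≤ a + b - x) : toggle a x b = a + b - x :=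
  if_pos h

lemma Bump.not_nonneg {p : List KLetter} {b : KLetter} (hb : Bump p b) :
    ¬ 0 ≤ height (p ++ [b]) := fun h => by
  have := h b
  have := hb.ne_A
  have := hb.height_eq_zero
  simp only [Pi.zero_apply] at *
  grind

lemma IsKreweras.path_pro {w : List KLetter} (hw : IsKreweras w) {k : ℕ}
    (hk : k + 1 < w.length) :
    path (pro w) (k + 1) = toggle (path (pro w) k) (path w (k + 1)) (path w (k + 2)) := by
  obtain ⟨p, b, q, rfl, hb⟩ := hw.exists_bump (List.ne_nil_of_length_pos (by omega))
  have hk : k + 1 ≤ p.length + 1 + q.length := by simp at hk; omega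
  have hnonneg := (hw.pro (by simp)).path_nonneg (k + 1)
  rw [hb.path_pro q hk] at hnonneg ⊢
  rw [hb.path_pro q (by omega)]
  rcases eq_or_ne k p.length with rfl | hne
  -- At the bump, the reflected point lies outside the quadrant.
  · have hx : path (A :: (p ++ b :: q)) (p.length + 1) = height [A] + height p := by
      funext c
      simp
      grind
    have hy : path (A :: (p ++ b :: q)) (p.length + 2) = height [A] + height (p ++ [b]) := by
      funext c
      simp [List.take_length_add_append]
      grind
    have hp : height (p ++ [b]) = height p + height [b] := funext fun c => height_append p [b] c
    have hout : ¬ 0 ≤ height [A] + height p - height [A] + (height [A] + height (p ++ [b]))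
        - (height [A] + height p) := by
      convert hb.not_nonneg using 2
      abel
    rw [if_neg (by omega), if_pos le_rfl, hx, hy, toggle, if_neg hout, hp]
    abel
  · have hsame : k + 1 ≤ p.length ↔ k ≤ p.length := by omega
    simp only [hsame] at hnonneg ⊢
    have hsum : ∀ x y z : KLetter → ℤ, x - z + y - x = y - z := fun x y z => by abel
    rw [toggle_of_nonneg, hsum]
    rwa [hsum]

lemma path_zero (w : List KLetter) : path w 0 = 0 := by
  funext b
  simp

lemma isKrewerasWord_tauDown {n : ℕ} {w : List KLetter} (hw : IsKrewerasWord n w) (j : ℕ) :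
    IsKrewerasWord n (tauDown n j w) := by
  induction j with
  | zero => exact hw
  | succ j ih => exact isKrewerasWord_tau ih

lemma path_tauDown {n : ℕ} {w : List KLetter} (hw : IsKrewerasWord n w) {j : ℕ} (hj : j < 3 * n)
    (k : ℕ) : path (tauDown n j w) k = if k ≤ j then path (pro w) k else path w k := by
  induction j generalizing k with
  | zero =>
    rcases k with _ | k
    · simp only [path_zero, ite_self]
    · rfl
  | succ j ih =>
    obtain ⟨hlen, hw'⟩ := isKrewerasWord_iff.1 hw
    rw [tauDown, path_tau (isKrewerasWord_tauDown hw j) hj]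
    rcases eq_or_ne k (j + 1) with rfl | hk
    · simp [ih (by omega), hw'.path_pro (hj.trans_eq hlen.symm)]
    · rw [Function.update_of_ne hk, ih (by omega)]
      simp only [show k ≤ j + 1 ↔ k ≤ j by omega]

lemma isKrewerasWord_pro {n : ℕ} (hn : 0 < n) {w : List KLetter} (hw : IsKrewerasWord n w) :
    IsKrewerasWord n (pro w) := by
  obtain ⟨hlen, hw⟩ := isKrewerasWord_iff.1 hw
  have hne : w ≠ [] := List.ne_nil_of_length_pos (by omega)
  exact isKrewerasWord_iff.2 ⟨(hw.length_pro hne).trans hlen, hw.pro hne⟩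

lemma isKrewerasWord_iterate_pro {n : ℕ} (hn : 0 < n) {w : List KLetter}
    (hw : IsKrewerasWord n w) (k : ℕ) : IsKrewerasWord n (pro^[k] w) :=
  Function.Iterate.rec (IsKrewerasWord n) hw (fun _ => isKrewerasWord_pro hn) k

lemma path_pro_congr {n : ℕ} {v w : List KLetter} (hv : IsKrewerasWord n v)
    (hw : IsKrewerasWord n w) {m k : ℕ} (hm : m < 3 * n) (hk : k ≤ m)
    (h : ∀ i ≤ m + 1, path v i = path w i) : path (pro v) k = path (pro w) k := by
  rw [isKrewerasWord_iff] at hv hw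
  induction k with
  | zero => simp only [path_zero]
  | succ k ih =>
    rw [hv.2.path_pro (by omega), hw.2.path_pro (by omega), ih (by omega), h _ (by omega),
      h _ (by omega)]

lemma path_iterate_pro_congr {n : ℕ} {v w : List KLetter} (hv : IsKrewerasWord n v)
    (hw : IsKrewerasWord n w) {m k : ℕ} (r : ℕ) (hr : m + r ≤ 3 * n) (hk : k ≤ m)
    (h : ∀ i ≤ m + r, path v i = path w i) : path (pro^[r] v) k = path (pro^[r] w) k := by
  induction r generalizing v w with
  | zero => exact h k hk
  | succ r ih =>
    have hn : 0 < n := by omega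
    exact ih (isKrewerasWord_pro hn hv) (isKrewerasWord_pro hn hw) (by omega)
      fun i hi => path_pro_congr hv hw (m := m + r) (by omega) hi h

lemma path_evacAux {n : ℕ} {w : List KLetter} (hw : IsKrewerasWord n w) {j : ℕ} (hj : j < 3 * n)
    (k : ℕ) : path (evacAux n j w) k = path (pro^[j + 1 - k] w) k := by
  have hn : 0 < n := by omega
  induction j generalizing w with
  | zero =>
    rcases k with _ | k
    · simp only [path_zero]
    · simp [evacAux]
  | succ j ih =>
    have hv := isKrewerasWord_tauDown hw (j + 1)
    rw [evacAux, ih hv (by omega)]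
    rcases le_or_gt k (j + 1) with hk | hk
    · rw [show j + 1 + 1 - k = (j + 1 - k) + 1 by omega, Function.iterate_succ_apply]
      refine path_iterate_pro_congr hv (isKrewerasWord_pro hn hw) (m := k) _ (by omega) le_rfl ?_
      intro i hi
      rw [path_tauDown hw hj, if_pos (by omega)]
    · rw [show j + 1 - k = 0 by omega, show j + 1 + 1 - k = 0 by omega, Function.iterate_zero_apply,
        Function.iterate_zero_apply, path_tauDown hw hj, if_neg (by omega)]

lemma path_evac {n : ℕ} (hn : 0 < n) {w : List KLetter} (hw : IsKrewerasWord n w) (k : ℕ) :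
    path (evac n w) k = path (pro^[3 * n - k] w) k := by
  rw [evac, path_evacAux hw (by omega), Nat.sub_add_cancel (by omega)]

lemma isKrewerasWord_evacAux {n : ℕ} {w : List KLetter} (hw : IsKrewerasWord n w) (j : ℕ) :
    IsKrewerasWord n (evacAux n j w) := by
  induction j generalizing w with
  | zero => exact hw
  | succ j ih => exact ih (isKrewerasWord_tauDown hw (j + 1))

lemma isKrewerasWord_evac {n : ℕ} {w : List KLetter} (hw : IsKrewerasWord n w) :
    IsKrewerasWord n (evac n w) :=
  isKrewerasWord_evacAux hw _

lemma pro_evac_pro {n : ℕ} (hn : 0 < n) {w : List KLetter} (hw : IsKrewerasWord n w) :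
    pro (evac n (pro w)) = evac n w := by
  have hpro := isKrewerasWord_pro hn hw
  have hevac := isKrewerasWord_evac hpro
  refine path_injective (funext fun k => ?_)
  induction k with
  | zero => simp only [path_zero]
  | succ k ih =>
    rcases le_or_gt (3 * n) (k + 1) with hk | hk
    · rw [path_eq_zero (isKrewerasWord_pro hn hevac) hk, path_eq_zero (isKrewerasWord_evac hw) hk]
    have hy := isKrewerasWord_iterate_pro hn hw (3 * n - (k + 1))
    obtain ⟨hlen, hy'⟩ := isKrewerasWord_iff.1 hy
    obtain ⟨hlen', hevac'⟩ := isKrewerasWord_iff.1 hevac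
    have hpath (i : ℕ) : path (evac n (pro w)) i = path (pro^[3 * n - i + 1] w) i :=
      path_evac hn hpro i
    rw [hevac'.path_pro (by omega), ih, hpath, hpath, path_evac hn hw k, path_evac hn hw (k + 1),
      show 3 * n - k = 3 * n - (k + 1) + 1 by omega,
      show 3 * n - (k + 2) + 1 = 3 * n - (k + 1) by omega, Function.iterate_succ_apply',
      hy'.path_pro (by omega), toggle_toggle (hy'.path_nonneg _)]

lemma iterate_pro_evac_iterate_pro {n : ℕ} (hn : 0 < n) {w : List KLetter}
    (hw : IsKrewerasWord n w) (k : ℕ) : pro^[k] (evac n (pro^[k] w)) = evac n w := by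
  induction k generalizing w with
  | zero => rfl
  | succ k ih =>
    rw [Function.iterate_succ_apply', Function.iterate_succ_apply,
      ih (isKrewerasWord_pro hn hw), pro_evac_pro hn hw]

lemma pro_injOn {n : ℕ} : {w | IsKrewerasWord n w}.InjOn pro := by
  intro v hv w hw h
  refine path_injective (funext fun k => ?_)
  rcases le_total (3 * n) k with hk | hk
  · rw [path_eq_zero hv hk, path_eq_zero hw hk]
  obtain ⟨hlenv, hv'⟩ := isKrewerasWord_iff.1 hv
  obtain ⟨hlenw, hw'⟩ := isKrewerasWord_iff.1 hw
  induction hk using Nat.decreasingInduction with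
  | self => rw [path_eq_zero hv le_rfl, path_eq_zero hw le_rfl]
  | of_succ k hk ih =>
    rcases k with _ | k
    · simp only [path_zero]
    · calc path v (k + 1)
          = toggle (path (pro v) k) (path (pro v) (k + 1)) (path v (k + 2)) := by
            rw [hv'.path_pro (by omega), toggle_toggle (hv'.path_nonneg _)]
        _ = toggle (path (pro w) k) (path (pro w) (k + 1)) (path w (k + 2)) := by
            rw [h, ih]
        _ = path w (k + 1) := by
            rw [hw'.path_pro (by omega), toggle_toggle (hw'.path_nonneg _)]

lemma IsKreweras.getElem?_pro_of_eq_A {w : List KLetter} (hw : IsKreweras w) (hne : w ≠ [])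
    {i : ℕ} (hi : w[i + 1]? = some A) : (pro w)[i]? = some A := by
  obtain ⟨p, b, q, rfl, hb⟩ := hw.exists_bump hne
  rw [hb.pro_eq]
  grind

lemma IsKreweras.getElem?_pro_kiota {w : List KLetter} (hw : IsKreweras w) (hne : w ≠ []) :
    (pro w)[kiota w - 2]? = some A := by
  obtain ⟨p, b, q, rfl, hb⟩ := hw.exists_bump hne
  simp [hb.pro_eq, hb.kiota_eq]

lemma getElem?_iterate_pro_of_lt_kiota {n : ℕ} (hn : 0 < n) {w : List KLetter}
    (hw : IsKrewerasWord n w) {i k : ℕ} (h : i + k + 2 = kiota w) :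
    (pro^[k + 1] w)[i]? = some A := by
  induction k generalizing i with
  | zero =>
    obtain ⟨hlen, hw⟩ := isKrewerasWord_iff.1 hw
    have := hw.getElem?_pro_kiota (List.ne_nil_of_length_pos (by omega))
    rwa [← h] at this
  | succ k ih =>
    obtain ⟨hlen, hv⟩ := isKrewerasWord_iff.1 (isKrewerasWord_iterate_pro hn hw (k + 1))
    rw [Function.iterate_succ_apply']
    exact hv.getElem?_pro_of_eq_A (List.ne_nil_of_length_pos (by omega)) (ih (by omega))

lemma IsKreweras.not_onWall_of_getElem? {w : List KLetter} (hw : IsKreweras w) {k : ℕ}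
    (h : w[k]? = some A) : ¬ OnWall (path w (k + 1)) := by
  rintro ⟨b, hb, hk⟩
  have := hw.path_nonneg k b
  simp only [path_apply, Pi.zero_apply, List.take_add_one, h] at *
  grind

lemma kiota_evac {n : ℕ} (hn : 0 < n) {w : List KLetter} (hw : IsKrewerasWord n w) {r : ℕ}
    (hr : kiota (pro^[r] w) + r = 3 * n) : kiota (evac n w) = kiota (pro^[r] w) := by
  have hv := isKrewerasWord_iterate_pro hn hw r
  obtain ⟨hlen, hv'⟩ := isKrewerasWord_iff.1 hv
  have hevac := (isKrewerasWord_iff.1 (isKrewerasWord_evac hw)).1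
  obtain ⟨⟨hpos, hle, hwall⟩, -⟩ := hv'.isLeast_kiota (List.ne_nil_of_length_pos (by omega))
  have hpath {k d : ℕ} (h : k + d = kiota (pro^[r] w)) :
      path (evac n w) k = path (pro^[d] (pro^[r] w)) k := by
    rw [path_evac hn hw, ← Function.iterate_add_apply, show 3 * n - k = d + r by omega]
  refine kiota_eq_of_isLeast ⟨⟨hpos, by omega, ?_⟩, fun k ⟨hk, _, hkwall⟩ => ?_⟩
  · rwa [hpath (add_zero _)]
  · by_contra! hlt
    obtain ⟨i, rfl⟩ := Nat.exists_eq_add_of_lt hk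
    obtain ⟨d, hd⟩ := Nat.exists_eq_add_of_lt hlt
    rw [hpath (d := d + 1) (by omega)] at hkwall
    -- The `A` that replaces the bumped letter moves left by one position per promotion, so a step
    -- `A` leads to the point in question.
    have hy := (isKrewerasWord_iff.1 (isKrewerasWord_iterate_pro hn hv (d + 1))).2
    refine hy.not_onWall_of_getElem? ?_ hkwall
    exact getElem?_iterate_pro_of_lt_kiota hn hv (by omega)

/-! ### Periodicity of promotion -/

/-- The reflection of words exchanging the two walls. -/
def neg (w : List KLetter) : List KLetter :=
  w.map negL

@[simp, grind =] lemma neg_nil : neg [] = [] :=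
  rfl

@[simp, grind =] lemma neg_cons (a : KLetter) (w : List KLetter) :
    neg (a :: w) = negL a :: neg w :=
  rfl

@[simp, grind =] lemma neg_append (v w : List KLetter) : neg (v ++ w) = neg v ++ neg w :=
  List.map_append

@[simp, grind =] lemma length_neg (w : List KLetter) : (neg w).length = w.length :=
  List.length_map negL

lemma negL_involutive : Function.Involutive negL := by
  rintro (_ | _ | _) <;> rfl

lemma neg_involutive : Function.Involutive neg :=
  negL_involutive.list_map

lemma height_neg (w : List KLetter) (b : KLetter) : height (neg w) b = height w (negL b) := by
  induction w with
  | nil => simp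
  | cons a w ih =>
    rw [neg_cons, height_cons, height_cons, ih]
    cases a <;> cases b <;> rfl

lemma staysNonneg_neg {w : List KLetter} {b : KLetter} {x : ℤ} :
    StaysNonneg b x (neg w) ↔ StaysNonneg (negL b) x w := by
  have htake (k : ℕ) : (neg w).take k = neg (w.take k) := List.map_take.symm
  simp only [StaysNonneg, htake, height_neg]

lemma IsKreweras.neg {w : List KLetter} (hw : IsKreweras w) : IsKreweras (neg w) :=
  ⟨fun b => by rw [height_neg, hw.height_eq_zero], fun b => staysNonneg_neg.2 (hw.staysNonneg _)⟩

lemma Bump.neg {p : List KLetter} {b : KLetter} (hb : Bump p b) : Bump (neg p) (negL b) where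
  ne_A h := hb.ne_A (negL_involutive.injective h)
  staysNonneg c := staysNonneg_neg.2 (hb.staysNonneg _)
  height_eq_zero := by rw [height_neg, negL_involutive, hb.height_eq_zero]

lemma IsKreweras.pro_neg {w : List KLetter} (hw : IsKreweras w) (hne : w ≠ []) :
    pro (Kreweras.neg w) = Kreweras.neg (pro w) := by
  obtain ⟨p, b, q, rfl, hb⟩ := hw.exists_bump hne
  have := hb.neg.pro_eq (Kreweras.neg q)
  simp_all [negL, hb.pro_eq]

lemma IsKreweras.kiota_neg {w : List KLetter} (hw : IsKreweras w) (hne : w ≠ []) :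
    kiota (Kreweras.neg w) = kiota w := by
  obtain ⟨p, b, q, rfl, hb⟩ := hw.exists_bump hne
  have := hb.neg.kiota_eq (Kreweras.neg q)
  simp_all [negL, hb.kiota_eq]

lemma isKrewerasWord_neg {n : ℕ} {w : List KLetter} (hw : IsKrewerasWord n w) :
    IsKrewerasWord n (neg w) := by
  rw [isKrewerasWord_iff] at hw ⊢
  exact ⟨(length_neg w).trans hw.1, hw.2.neg⟩

lemma iterate_pro_neg {n : ℕ} (hn : 0 < n) {w : List KLetter} (hw : IsKrewerasWord n w) (k : ℕ) :
    pro^[k] (neg w) = neg (pro^[k] w) := by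
  induction k with
  | zero => rfl
  | succ k ih =>
    obtain ⟨hlen, hv⟩ := isKrewerasWord_iff.1 (isKrewerasWord_iterate_pro hn hw k)
    rw [Function.iterate_succ_apply', Function.iterate_succ_apply', ih,
      hv.pro_neg (List.ne_nil_of_length_pos (by omega))]

lemma append_eq_append_cons_iff {α : Type*} {l m p q : List α} {b : α} :
    l ++ m = p ++ b :: q ↔
      (∃ t, l = p ++ b :: t ∧ q = t ++ m) ∨ ∃ t, p = l ++ t ∧ m = t ++ b :: q := by
  rw [List.append_eq_append_iff]
  constructor
  · rintro (⟨t, rfl, rfl⟩ | ⟨t, rfl, h⟩)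
    · exact .inr ⟨t, rfl, rfl⟩
    · rcases t with _ | ⟨a, t⟩
      · exact .inr ⟨[], by simp, by simpa using h.symm⟩
      · obtain ⟨rfl, rfl⟩ := List.cons.inj h
        exact .inl ⟨t, rfl, rfl⟩
  · grind

lemma Bump.pro_eq_of_eq {p q w v : List KLetter} {b : KLetter} (hb : Bump p b)
    (hw : w = A :: (p ++ b :: q)) (hv : v = p ++ A :: (q ++ [b])) : pro w = v := by
  rw [hw, hv, hb.pro_eq]

/-- The admissible gaps between three letters `A`, `B`, `C` inserted into a word containing
`q ++ r`, as they occur while the resulting word is promoted: `q` separates `A` from `B`, and `r'`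
separates `B` from `C`. If `r` is nonempty then it begins with an `A`, which in `r'` is moved to
the end. -/
structure Gaps (q r r' : List KLetter) : Prop where
  append_eq : r ++ [A] = A :: r'
  staysNonneg_C : StaysNonneg C 0 (q ++ r)
  staysNonneg_left : StaysNonneg B (-height q B) q
  staysNonneg_right : StaysNonneg B 0 r'

lemma Gaps.not_bump {p q x y r' : List KLetter} {b : KLetter} (h : Gaps q (x ++ b :: y) r') :
    ¬ Bump (p ++ (q ++ x)) b := by
  intro hb
  obtain ⟨hr, hC, _, hr'⟩ := h
  have := hb.staysNonneg b
  have := hb.height_eq_zero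
  cases b with
  | A => exact hb.ne_A rfl
  | B =>
    obtain _ | ⟨a, x⟩ := x
    · simp at hr
    · obtain ⟨rfl, rfl⟩ : a = A ∧ x ++ B :: (y ++ [A]) = r' := by simpa using hr
      grind
  | C => grind

lemma Gaps.bump {p q r r' t : List KLetter} {b : KLetter} (h : Gaps q r r')
    (hb : Bump (p ++ (q ++ (r ++ t))) b) :
    Bump (p ++ A :: (q ++ B :: (r' ++ C :: t))) b := by
  obtain ⟨hr, _, hq, hr'⟩ := h
  have hheight (c : KLetter) : height r' c = height r c := by
    have := congrArg (height · c) hr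
    grind
  have := hb.ne_A
  have := hb.height_eq_zero
  refine ⟨hb.ne_A, fun c => ?_, by cases b <;> grind⟩
  have := hb.staysNonneg c
  have := (staysNonneg_append (b := c) (x := height (p ++ q) c) (v := r) (w := [A])).symm
  rw [hr] at this
  cases c <;> grind

lemma Gaps.bump_left {p q y r r' s : List KLetter} {b : KLetter} (h : Gaps (q ++ b :: y) r r')
    (hb : Bump (p ++ q) b) (hu : IsKreweras (A :: (p ++ (q ++ b :: (y ++ s))))) :
    b = B ∧ Bump (p ++ A :: (q ++ B :: y)) B ∧ Gaps q (A :: (y ++ r)) (y ++ A :: r') := by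
  obtain ⟨hr, hC, hq, hr'⟩ := h
  have hb₀ := hb.height_eq_zero
  have := hb.ne_A
  have := hb.staysNonneg B
  obtain rfl : b = B := by
    have := hb.staysNonneg C
    cases b <;> grind
  have hy : height y B = 0 := by
    have := hu.staysNonneg B
    grind
  refine ⟨rfl, ⟨hb.ne_A, fun c => ?_, by grind⟩, by simp [hr], by grind, by grind, by grind⟩
  have := hu.staysNonneg c
  have := hb.staysNonneg c
  grind

/-- The word `w` arises from `u` by inserting letters `A`, `B`, `C` with admissible gaps, the `A`
after `i` letters of `u` and the `C` after `j` further ones. Promoting `u` and `w` decreases `i`. -/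
inductive FirstPhase (i j : ℕ) (u w : List KLetter) : Prop
  | intro (p q r r' s : List KLetter) (u_eq : u = p ++ (q ++ (r ++ s)))
      (w_eq : w = p ++ A :: (q ++ B :: (r' ++ C :: s))) (length_p : p.length = i)
      (length_qr : (q ++ r).length = j) (gaps : Gaps q r r')

lemma FirstPhase.pro_pro {i j : ℕ} {u w : List KLetter} (hu : IsKreweras u)
    (h : FirstPhase (i + 1) j u w) : FirstPhase i j (pro u) (pro w) := by
  obtain ⟨p, q, r, r', s, rfl, rfl, hp, hqr, hgaps⟩ := h
  obtain ⟨P, b, Q, hP, hb⟩ := hu.exists_bump (List.ne_nil_of_length_pos (by grind))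
  obtain ⟨a, p, rfl⟩ := List.exists_cons_of_length_eq_add_one hp
  obtain ⟨rfl, hsplit⟩ : a = A ∧ p ++ (q ++ (r ++ s)) = P ++ b :: Q := by simpa using hP
  rw [List.cons_append, hsplit, hb.pro_eq]
  rcases append_eq_append_cons_iff.1 hsplit with ⟨t, rfl, rfl⟩ | ⟨z, rfl, hqrs⟩
  · exact .intro (P ++ A :: t) q r r' (s ++ [b]) (by simp)
      (hb.pro_eq_of_eq (by simp; rfl) (by simp)) (by simpa using hp) hqr hgaps
  rcases append_eq_append_cons_iff.1 hqrs with ⟨y, rfl, rfl⟩ | ⟨x, rfl, hrs⟩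
  · obtain ⟨rfl, hb', hgaps'⟩ := hgaps.bump_left hb (s := r ++ s) (by simpa using hu)
    exact .intro p z (A :: (y ++ r)) (y ++ A :: r') (s ++ [B]) (by simp)
      (hb'.pro_eq_of_eq (by simp; rfl) (by simp)) (by simpa using hp) (by grind) hgaps'
  rcases append_eq_append_cons_iff.1 hrs with ⟨y, rfl, rfl⟩ | ⟨t, rfl, rfl⟩
  · exact absurd hb hgaps.not_bump
  · exact .intro p q r r' (t ++ A :: (Q ++ [b])) (by simp)
      ((hgaps.bump hb).pro_eq_of_eq (by simp; rfl) (by simp)) (by simpa using hp) hqr hgaps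

/-- Some suffix of the word has more letters `A` than letters `B`. -/
def HasPosSuffix (s : List KLetter) : Prop :=
  ∃ x y, s = x ++ y ∧ 0 < height y B

lemma HasPosSuffix.set_A {x y : List KLetter} {b : KLetter} (h : HasPosSuffix (x ++ b :: y)) :
    HasPosSuffix (x ++ A :: y) := by
  obtain ⟨l, m, hlm, hm⟩ := h
  rcases append_eq_append_cons_iff.1 hlm.symm with ⟨t, rfl, rfl⟩ | ⟨t, rfl, rfl⟩
  · exact ⟨x ++ A :: t, m, by simp, hm⟩
  · exact ⟨l, t ++ A :: y, by simp, by grind⟩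

/-- The word `w` arises from `u` by inserting the letters `A`, `C` after `i` letters of `u` and `B`
after the `m` following letters `s`. This is only required as long as promotion has not replaced
a letter `B` of `s` by `A`, whereupon `s` acquires a suffix with more letters `A` than `B`. -/
inductive SecondPhase (i m : ℕ) (u w : List KLetter) : Prop
  | intro (p s o : List KLetter) (u_eq : u = p ++ (s ++ o)) (length_p : p.length = i)
      (length_s : s.length = m)
      (w_eq : ¬ HasPosSuffix s → w = p ++ A :: C :: (s ++ B :: o))

lemma FirstPhase.pro_right {j : ℕ} {u w : List KLetter} (hu : IsKreweras u)
    (h : FirstPhase 0 j u w) : SecondPhase j (u.length - j) u (pro w) := by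
  obtain ⟨p, q, r, r', s, rfl, rfl, hp, hqr, hgaps⟩ := h
  obtain rfl := List.length_eq_zero_iff.1 hp
  have hb : Bump q B := by
    have := hgaps.staysNonneg_left
    refine ⟨by simp, fun c => ?_, ?_⟩
    · have := hu.staysNonneg c
      grind
    · have := hu.staysNonneg B
      grind
  refine .intro (q ++ r) s [] (by simp) hqr (by grind) fun _ => hb.pro_eq_of_eq (by simp; rfl) ?_
  have := congrArg (· ++ C :: (s ++ [B])) hgaps.append_eq
  grind

lemma SecondPhase.pro_pro {i m : ℕ} {u w : List KLetter} (hu : IsKreweras u)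
    (h : SecondPhase (i + 1) m u w) : SecondPhase i m (pro u) (pro w) := by
  obtain ⟨p, s, o, rfl, hp, hs, hw⟩ := h
  obtain ⟨P, b, Q, hP, hb⟩ := hu.exists_bump (List.ne_nil_of_length_pos (by grind))
  obtain ⟨a, p, rfl⟩ := List.exists_cons_of_length_eq_add_one hp
  obtain ⟨rfl, hsplit⟩ : a = A ∧ p ++ (s ++ o) = P ++ b :: Q := by simpa using hP
  rw [List.cons_append, hsplit, hb.pro_eq]
  rcases append_eq_append_cons_iff.1 hsplit with ⟨t, rfl, rfl⟩ | ⟨z, rfl, hso⟩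
  · exact .intro (P ++ A :: t) s (o ++ [b]) (by simp) (by simpa using hp) hs fun h =>
      hb.pro_eq_of_eq (by rw [hw h]; simp; rfl) (by simp)
  have hstays := hb.staysNonneg
  have hb₀ := hb.height_eq_zero
  have hbA := hb.ne_A
  rcases append_eq_append_cons_iff.1 hso with ⟨y, rfl, rfl⟩ | ⟨x, rfl, rfl⟩
  · refine .intro p (z ++ A :: y) (o ++ [b]) (by simp) (by simpa using hp) (by simpa using hs)
      fun h => ?_
    have hyA : height (A :: y) B ≤ 0 := by
      by_contra! hy
      exact h ⟨z, A :: y, by simp, hy⟩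
    have := hu.staysNonneg B
    obtain rfl : b = C := by cases b <;> grind
    have hb' : Bump (p ++ A :: C :: z) C := by
      refine ⟨hbA, fun c => ?_, by grind⟩
      have := hstays c
      cases c <;> grind
    exact hb'.pro_eq_of_eq (by rw [hw (mt HasPosSuffix.set_A h)]; simp; rfl) (by simp)
  · have hb' : Bump (p ++ A :: C :: (s ++ B :: x)) b := by
      refine ⟨hbA, fun c => ?_, by cases b <;> grind⟩
      have := hstays c
      cases c <;> grind
    exact .intro p s (x ++ A :: (Q ++ [b])) (by simp) (by simpa using hp) hs fun h =>
      hb'.pro_eq_of_eq (by rw [hw h]; simp; rfl) (by simp)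

lemma SecondPhase.eq_of_not_hasPosSuffix {s o w : List KLetter}
    (h : SecondPhase 0 s.length (s ++ o) w) (hs : ¬ HasPosSuffix s) :
    w = A :: C :: (s ++ B :: o) := by
  obtain ⟨p, s', o', hso, hp, hlen, hw⟩ := h
  obtain rfl := List.length_eq_zero_iff.1 hp
  obtain ⟨rfl, rfl⟩ := List.append_inj (show s ++ o = s' ++ o' from hso) hlen.symm
  exact hw hs

lemma iterate_pro_rel {R : ℕ → List KLetter → List KLetter → Prop}
    (hR : ∀ {i u w}, IsKreweras u → R (i + 1) u w → R i (pro u) (pro w)) {n : ℕ} (hn : 0 < n)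
    {i : ℕ} {u w : List KLetter} (hu : IsKrewerasWord n u) (h : R i u w) :
    R 0 (pro^[i] u) (pro^[i] w) := by
  induction i generalizing u w with
  | zero => exact h
  | succ i ih => exact ih (isKrewerasWord_pro hn hu) (hR (isKrewerasWord_iff.1 hu).2 h)

lemma not_hasPosSuffix_neg {v : List KLetter} (hv : StaysNonneg C 0 v) (h₀ : height v C = 0) :
    ¬ HasPosSuffix (neg v) := by
  rintro ⟨x, y, hxy, hy⟩
  obtain rfl : v = neg x ++ neg y := by rw [← neg_append, ← hxy, neg_involutive]
  have := height_neg y C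
  grind [negL]

lemma iterate_pro_insert_letters {n : ℕ} {p q : List KLetter} (hu : IsKrewerasWord n (p ++ q))
    (hp : StaysNonneg C 0 p) (hp₀ : height p C = 0)
    (ih : pro^[3 * n] (p ++ q) = neg (p ++ q)) :
    pro^[3 * (n + 1)] (A :: B :: (p ++ C :: q)) = neg (A :: B :: (p ++ C :: q)) := by
  obtain ⟨hlen, hu'⟩ := isKrewerasWord_iff.1 hu
  obtain rfl | hn := n.eq_zero_or_pos
  · obtain ⟨rfl, rfl⟩ : p = [] ∧ q = [] := by simpa using hlen
    decide
  have hB := hu'.staysNonneg B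
  have hC := hu'.staysNonneg C
  have hB₀ := hu'.height_eq_zero B
  have hbump₁ : Bump [] B := ⟨by simp, by simp [staysNonneg_nil], by simp⟩
  have hbump₂ : Bump p C := ⟨by simp, fun c => by cases c <;> grind, hp₀⟩
  have hpro : pro (pro (A :: B :: (p ++ C :: q))) = p ++ A :: (q ++ [B, C]) :=
    hbump₂.pro_eq_of_eq (hbump₁.pro_eq_of_eq rfl (by simp; rfl)) (by simp)
  have hfirst : FirstPhase p.length q.length (p ++ q) (pro (pro (A :: B :: (p ++ C :: q)))) :=
    .intro p q [] [] [] (by simp) hpro rfl (by simp) ⟨rfl, by grind, by grind, by grind⟩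
  have hpu := isKrewerasWord_iff.1 (isKrewerasWord_iterate_pro hn hu p.length)
  have hsecond :=
    (iterate_pro_rel (R := (FirstPhase · q.length)) FirstPhase.pro_pro hn hu hfirst).pro_right hpu.2
  have hlast := iterate_pro_rel (R := (SecondPhase · _)) SecondPhase.pro_pro hn
    (isKrewerasWord_iff.2 hpu) hsecond
  have hlen' : q.length + p.length = 3 * n := by grind
  have hm : (pro^[p.length] (p ++ q)).length - q.length = (neg p).length := by grind
  rw [← Function.iterate_add_apply, hlen', ih, hm, neg_append] at hlast
  have hsteps : 3 * (n + 1) = q.length + (1 + (p.length + 2)) := by omega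
  rw [hsteps]
  simpa [Function.iterate_add_apply, negL] using
    hlast.eq_of_not_hasPosSuffix (not_hasPosSuffix_neg hp hp₀)

lemma iterate_pro_A_cons_B_cons {n : ℕ} {v : List KLetter}
    (ih : ∀ {u}, IsKrewerasWord n u → pro^[3 * n] u = neg u)
    (hv : IsKrewerasWord (n + 1) (A :: B :: v)) :
    pro^[3 * (n + 1)] (A :: B :: v) = neg (A :: B :: v) := by
  obtain ⟨hlen, hv⟩ := isKrewerasWord_iff.1 hv
  have hcross : ¬ ∀ c ∈ ({C} : Set KLetter), StaysNonneg c 0 v := fun h => by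
    have := h C rfl
    have := hv.height_eq_zero C
    grind
  obtain ⟨p, q, b, hbC, -, rfl, hp, hp₀⟩ := exists_first_crossing hcross
  obtain rfl : b = C := hbC
  have hp := hp C rfl
  have hu : IsKrewerasWord n (p ++ q) := by
    refine isKrewerasWord_iff.2 ⟨by grind, fun c => ?_, fun c => ?_⟩
    · have := hv.height_eq_zero c
      cases c <;> grind
    · have := hv.staysNonneg c
      cases c <;> grind
  exact iterate_pro_insert_letters hu hp hp₀ (ih hu)

lemma IsKreweras.kiota_pro_lt {v : List KLetter} (hw : IsKreweras (A :: A :: v)) :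
    kiota (pro (A :: A :: v)) < kiota (A :: A :: v) := by
  obtain ⟨p, b, q, h, hb⟩ := hw.exists_bump (by simp)
  obtain _ | ⟨a, p⟩ := p
  · have := hb.ne_A
    simp_all
  obtain ⟨rfl, rfl⟩ : A = a ∧ v = p ++ b :: q := by simpa using h
  have hpro : pro (A :: A :: (p ++ b :: q)) = A :: p ++ A :: (q ++ [b]) := hb.pro_eq q
  have hmem : p.length + 1 ∈ wallTimes (pro (A :: A :: (p ++ b :: q))) := by
    refine ⟨by simp, by rw [hpro]; simp, b, hb.ne_A, ?_⟩
    simpa [hpro] using hb.height_eq_zero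
  calc kiota (pro (A :: A :: (p ++ b :: q)))
      ≤ p.length + 1 := ((hw.pro (by simp)).isLeast_kiota (by simp [hpro])).2 hmem
    _ < p.length + 3 := by omega
    _ = kiota (A :: A :: (p ++ b :: q)) := (hb.kiota_eq q).symm

theorem iterate_pro_eq_neg {n : ℕ} {w : List KLetter} (hw : IsKrewerasWord n w) :
    pro^[3 * n] w = neg w := by
  induction n generalizing w with
  | zero => simp [List.length_eq_zero_iff.1 hw.1]
  | succ n ih =>
    induction h : kiota w using Nat.strong_induction_on generalizing w with
    | _ k ihk =>
      obtain ⟨hlen, hw'⟩ := isKrewerasWord_iff.1 hw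
      obtain ⟨p, b, q, rfl, hb⟩ := hw'.exists_bump (List.ne_nil_of_length_pos (by omega))
      subst h
      rcases p with _ | ⟨a, p⟩
      · cases b with
        | A => exact absurd rfl hb.ne_A
        | B => exact iterate_pro_A_cons_B_cons ih hw
        | C =>
          apply neg_involutive.injective
          rw [← iterate_pro_neg n.succ_pos hw]
          exact iterate_pro_A_cons_B_cons ih (isKrewerasWord_neg hw)
      · obtain rfl : a = A := by
          have := hb.staysNonneg a
          grind
        have hpro := isKrewerasWord_pro n.succ_pos hw
        refine pro_injOn (isKrewerasWord_iterate_pro n.succ_pos hw _)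
          (isKrewerasWord_neg hw) ?_
        rw [← Function.iterate_succ_apply' pro, Function.iterate_succ_apply,
          ihk _ hw'.kiota_pro_lt hpro rfl, hw'.pro_neg (by simp)]

/-! ### The trip permutation -/

lemma periodic_kiota_iterate_pro {n : ℕ} (hn : 0 < n) {w : List KLetter}
    (hw : IsKrewerasWord n w) : Function.Periodic (fun k => kiota (pro^[k] w)) (3 * n) := by
  intro k
  obtain ⟨hlen, hv⟩ := isKrewerasWord_iff.1 (isKrewerasWord_iterate_pro hn hw k)
  simp only [Function.iterate_add_apply, iterate_pro_eq_neg hw, iterate_pro_neg hn hw]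
  exact hv.kiota_neg (List.ne_nil_of_length_pos (by omega))

lemma kiota_iterate_pro_eq_of_modEq {n : ℕ} (hn : 0 < n) {w : List KLetter}
    (hw : IsKrewerasWord n w) {k l : ℕ} (h : k ≡ l [MOD 3 * n]) :
    kiota (pro^[k] w) = kiota (pro^[l] w) := by
  have hper := periodic_kiota_iterate_pro hn hw
  calc kiota (pro^[k] w) = kiota (pro^[k % (3 * n)] w) := (hper.map_mod_nat k).symm
    _ = kiota (pro^[l % (3 * n)] w) := by rw [h]
    _ = kiota (pro^[l] w) := hper.map_mod_nat l

lemma kiota_iterate_pro_mem_Icc {n : ℕ} (hn : 0 < n) {w : List KLetter}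
    (hw : IsKrewerasWord n w) (k : ℕ) : kiota (pro^[k] w) ∈ Set.Icc 1 (3 * n) := by
  obtain ⟨hlen, hv⟩ := isKrewerasWord_iff.1 (isKrewerasWord_iterate_pro hn hw k)
  have h := (hv.isLeast_kiota (List.ne_nil_of_length_pos (by omega))).1
  exact ⟨h.1, hlen ▸ h.2.1⟩

lemma kiota_iterate_pro_evac {n : ℕ} (hn : 0 < n) {w : List KLetter} (hw : IsKrewerasWord n w)
    {i j : ℕ} (h : 3 * n ∣ kiota (pro^[j] w) + j + i) :
    kiota (pro^[i] (evac n w)) = kiota (pro^[j] w) := by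
  obtain ⟨_, hle⟩ := kiota_iterate_pro_mem_Icc hn hw j
  obtain ⟨r, hr⟩ := Nat.exists_eq_add_of_le hle
  obtain ⟨m, hm⟩ := h
  obtain ⟨k, hk⟩ : ∃ k, i + k = 3 * n * i :=
    ⟨3 * n * i - i, Nat.add_sub_of_le (Nat.le_mul_of_pos_left i (by omega))⟩
  have hw' := isKrewerasWord_iterate_pro hn hw k
  have hkr : r + k ≡ j [MOD 3 * n] := by
    refine Nat.ModEq.add_right_cancel' (kiota (pro^[j] w) + i) ?_
    calc r + k + (kiota (pro^[j] w) + i) = 3 * n + 3 * n * i := by omega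
      _ ≡ 3 * n * m [MOD 3 * n] := by simp [Nat.ModEq]
      _ = j + (kiota (pro^[j] w) + i) := by omega
  have hrk : kiota (pro^[r] (pro^[k] w)) = kiota (pro^[j] w) := by
    rw [← Function.iterate_add_apply, kiota_iterate_pro_eq_of_modEq hn hw hkr]
  calc kiota (pro^[i] (evac n w)) = kiota (pro^[i + k] (evac n (pro^[k] w))) := by
        rw [Function.iterate_add_apply, iterate_pro_evac_iterate_pro hn hw]
    _ = kiota (evac n (pro^[k] w)) := by
        exact kiota_iterate_pro_eq_of_modEq hn (isKrewerasWord_evac hw') (l := 0)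
          (by simp [hk, Nat.ModEq])
    _ = kiota (pro^[r] (pro^[k] w)) := kiota_evac hn hw' (by omega)
    _ = kiota (pro^[j] w) := hrk

lemma ksigma_succ_eq_iff {n : ℕ} {w : List KLetter} {i j : ℕ} (hpos : 0 < kiota (pro^[i] w))
    (hj : j < 3 * n) : ksigma n w (i + 1) = 3 * n - j ↔ 3 * n ∣ kiota (pro^[i] w) + i + j := by
  rw [ksigma, Nat.add_sub_cancel]
  constructor
  · intro h
    have := Nat.div_add_mod (kiota (pro^[i] w) + (i + 1) - 2) (3 * n)
    exact ⟨(kiota (pro^[i] w) + (i + 1) - 2) / (3 * n) + 1, by rw [mul_add]; omega⟩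
  · rintro ⟨_ | m, hm⟩
    · omega
    · rw [show kiota (pro^[i] w) + (i + 1) - 2 = 3 * n - j - 1 + 3 * n * m by
        rw [mul_add] at hm; omega, Nat.add_mul_mod_self_left, Nat.mod_eq_of_lt (by omega)]
      omega

end Kreweras

/-- `σ_{evac(w)} = rc(σ_w⁻¹)`: for every `i ∈ {1, …, 3n}`, with `j = σ_w⁻¹(3n+1-i)`,
we have `σ_{evac(w)}(i) = 3n + 1 - j`. -/
theorem ksigma_evac (n : ℕ) (w : List KLetter) (hw : IsKrewerasWord n w) :
    ∀ i j : ℕ, 1 ≤ i → i ≤ 3 * n → 1 ≤ j → j ≤ 3 * n →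
      ksigma n w j = 3 * n + 1 - i →
      ksigma n (evac n w) i = 3 * n + 1 - j := by
  intro i j hi hin hj hjn h
  obtain ⟨i, rfl⟩ := Nat.exists_eq_add_of_le' hi
  obtain ⟨j, rfl⟩ := Nat.exists_eq_add_of_le' hj
  have hn : 0 < n := by omega
  have hpos := (Kreweras.kiota_iterate_pro_mem_Icc hn hw j).1
  rw [Nat.add_sub_add_right] at h ⊢
  have hdvd := (Kreweras.ksigma_succ_eq_iff hpos hin).1 h
  have hkiota := Kreweras.kiota_iterate_pro_evac hn hw hdvd
  rw [Kreweras.ksigma_succ_eq_iff (hkiota ▸ hpos) hjn, hkiota, Nat.add_right_comm]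
  exact hdvd
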